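/- arXiv:2604.14647 — 8 statements merged into one kernel-verified Lean document; each statement's English description precedes it below -/
import Mathlib

section
/- Let p ≥ 0 be a real number, let R be a finite relation between finite types A and B, and let (X, Y) be any pair of random variables supported on R. Then H(X) + p·H(Y|X) ≤ ln( Σ_{a ∈ A} deg_R(a)^p ), where the power is the real power (with 0^0 = 1). -/
/-! The bound is two applications of the log-sum inequality
`∑ qᵢ log (wᵢ / qᵢ) ≤ Q log (W / Q)`, where `Q = ∑ qᵢ` and `W = ∑ wᵢ`
(`sum_mul_log_sub_log_le`).

Write `q a b` for the joint law and `q a` for the law of `X`. For fixed `a`, taking the weight to be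
the indicator of `R` on the fibre over `a` gives
`-∑ b, q a b * log (q a b) + q a * log (q a) ≤ q a * log (deg a)`; summing over `a` yields
`H(Y|X) ≤ ∑ a, q a * log (deg a)`. Hence
`H(X) + p H(Y|X) ≤ ∑ a, q a * (log (deg a ^ p) - log (q a))`,
and the inequality with weights `deg a ^ p` and total mass `1` finishes the proof. -/

open MeasureTheory Finset

/-- The probability that a random variable `X` takes the value `a`. -/
noncomputable def prob {Ω : Type*} [MeasurableSpace Ω] (μ : Measure Ω)
    {α : Type*} (X : Ω → α) (a : α) : ℝ :=
  (μ (X ⁻¹' {a})).toReal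

/-- Shannon entropy (in nats) of a random variable valued in a finite type. -/
noncomputable def entropy {Ω : Type*} [MeasurableSpace Ω] (μ : Measure Ω)
    {α : Type*} [Fintype α] (X : Ω → α) : ℝ :=
  - ∑ a : α, prob μ X a * Real.log (prob μ X a)

/-- Conditional entropy `H(Y|X) = H(X, Y) - H(X)`. -/
noncomputable def condEntropy {Ω : Type*} [MeasurableSpace Ω] (μ : Measure Ω)
    {α β : Type*} [Fintype α] [Fintype β] (Y : Ω → β) (X : Ω → α) : ℝ :=
  entropy μ (fun ω => (X ω, Y ω)) - entropy μ X

/-- Mutual information `I(X;Y) = H(X) + H(Y) - H(X, Y)`. -/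
noncomputable def mutualInfo {Ω : Type*} [MeasurableSpace Ω] (μ : Measure Ω)
    {α β : Type*} [Fintype α] [Fintype β] (X : Ω → α) (Y : Ω → β) : ℝ :=
  entropy μ X + entropy μ Y - entropy μ (fun ω => (X ω, Y ω))

/-- `degA R a` is the number of `b` with `(a, b) ∈ R`. -/
def degA {A B : Type*} [DecidableEq A] (R : Finset (A × B)) (a : A) : ℕ :=
  (R.filter fun x => x.1 = a).card

/-- `degB R b` is the number of `a` with `(a, b) ∈ R`. -/
def degB {A B : Type*} [DecidableEq B] (R : Finset (A × B)) (b : B) : ℕ :=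
  (R.filter fun x => x.2 = b).card

/-- The log-sum inequality, with the log of a quotient written as a difference of logs. The convention
`log 0 = 0` is harmless since the terms with `q i = 0` vanish. -/
lemma sum_mul_log_sub_log_le {ι : Type*} (s : Finset ι) (q w : ι → ℝ)
    (hq : ∀ i ∈ s, 0 ≤ q i) (hw : ∀ i ∈ s, 0 ≤ w i) (hqw : ∀ i ∈ s, q i ≠ 0 → 0 < w i) :
    ∑ i ∈ s, q i * (Real.log (w i) - Real.log (q i)) ≤
      (∑ i ∈ s, q i) * (Real.log (∑ i ∈ s, w i) - Real.log (∑ i ∈ s, q i)) := by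
  by_cases h0 : ∑ i ∈ s, q i = 0
  · have hz := (Finset.sum_eq_zero_iff_of_nonneg hq).1 h0
    rw [h0, zero_mul]
    exact (Finset.sum_eq_zero fun i hi => by rw [hz i hi, zero_mul]).le
  obtain ⟨j, hj, hjq⟩ := Finset.exists_ne_zero_of_sum_ne_zero h0
  have hQ : 0 < ∑ i ∈ s, q i := lt_of_le_of_ne (Finset.sum_nonneg hq) (Ne.symm h0)
  have hW : 0 < ∑ i ∈ s, w i := Finset.sum_pos' hw ⟨j, hj, hqw j hj hjq⟩
  set Q := ∑ i ∈ s, q i with hQdef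
  set W := ∑ i ∈ s, w i with hWdef
  -- Termwise, `log t ≤ t - 1` at `t = (wᵢ / W) / (qᵢ / Q)`.
  have key : ∀ i ∈ s, q i * (Real.log (w i) - Real.log (q i)) ≤
      q i * (Real.log W - Real.log Q) + (w i * (Q / W) - q i) := by
    intro i hi
    by_cases hi0 : q i = 0
    · have : 0 ≤ w i * (Q / W) := mul_nonneg (hw i hi) (by positivity)
      simpa [hi0] using this
    have hqi : 0 < q i := lt_of_le_of_ne (hq i hi) (Ne.symm hi0)
    have hwi := hqw i hi hi0
    have h1 := Real.log_le_sub_one_of_pos (x := w i * Q / (q i * W)) (by positivity)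
    rw [Real.log_div (by positivity) (by positivity), Real.log_mul hwi.ne' hQ.ne',
      Real.log_mul hqi.ne' hW.ne'] at h1
    have h2 := mul_le_mul_of_nonneg_left h1 hqi.le
    have h3 : q i * (w i * Q / (q i * W) - 1) = w i * (Q / W) - q i := by
      field_simp
    rw [h3] at h2
    linarith
  refine (Finset.sum_le_sum key).trans (le_of_eq ?_)
  rw [Finset.sum_add_distrib, Finset.sum_sub_distrib, ← Finset.sum_mul, ← Finset.sum_mul,
    ← hQdef, ← hWdef]
  field_simp
  ring

/-- star bound, Lemma 4.1 of Abo Khamis et al.: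
for `p ≥ 0` and `(X, Y)` supported on `R`,
`H(X) + p·H(Y|X) ≤ ln (∑ a, deg_R(a) ^ p)` (real power, `0 ^ 0 = 1`). -/
theorem stmt0 {Ω : Type*} [MeasurableSpace Ω]
    {A B : Type*} [Fintype A] [Fintype B] [DecidableEq A]
    [MeasurableSpace A] [MeasurableSingletonClass A]
    [MeasurableSpace B] [MeasurableSingletonClass B]
    (p : ℝ) (hp : 0 ≤ p) (R : Finset (A × B))
    (μ : Measure Ω) [IsProbabilityMeasure μ]
    (X : Ω → A) (Y : Ω → B) (hX : Measurable X) (hY : Measurable Y)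
    (hsupp : ∀ᵐ ω ∂μ, (X ω, Y ω) ∈ R) :
    entropy μ X + p * condEntropy μ Y X ≤
      Real.log (∑ a : A, (degA R a : ℝ) ^ p) := by
  classical
  set q : A → ℝ := prob μ X with hq
  set r : A × B → ℝ := prob μ (fun ω => (X ω, Y ω)) with hr
  have q_nonneg : ∀ a, 0 ≤ q a := fun a => ENNReal.toReal_nonneg
  have r_nonneg : ∀ x, 0 ≤ r x := fun x => ENNReal.toReal_nonneg
  have q_sum : ∑ a, q a = 1 := by
    have h := sum_measureReal_preimage_singleton (μ := μ) (f := X) (Finset.univ : Finset A)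
      (fun a _ => hX (measurableSet_singleton a))
    simpa [q, prob, measureReal_def] using h
  have r_meas : ∀ x : A × B, MeasurableSet ((fun ω => (X ω, Y ω)) ⁻¹' {x}) := by
    rintro ⟨a, b⟩
    have : (fun ω => (X ω, Y ω)) ⁻¹' {(a, b)} = X ⁻¹' {a} ∩ Y ⁻¹' {b} := by
      ext ω; simp
    rw [this]
    exact (hX (measurableSet_singleton a)).inter (hY (measurableSet_singleton b))
  have r_sum : ∀ a, ∑ b, r (a, b) = q a := by
    intro a
    have h := sum_measureReal_preimage_singleton (μ := μ) (f := fun ω => (X ω, Y ω))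
      ((Finset.univ : Finset B).map ⟨fun b => (a, b), Prod.mk_right_injective a⟩)
      (fun x _ => r_meas x)
    have h2 : (fun ω => (X ω, Y ω)) ⁻¹'
        (((Finset.univ : Finset B).map ⟨fun b => (a, b), Prod.mk_right_injective a⟩ :
          Finset (A × B)) : Set (A × B)) = X ⁻¹' {a} := by
      ext ω; simp [eq_comm]
    rw [h2, Finset.sum_map] at h
    simpa [q, r, prob, measureReal_def] using h
  have r_supp : ∀ x, r x ≠ 0 → x ∈ R := by
    intro x hx
    by_contra hxR
    apply hx
    have : μ ((fun ω => (X ω, Y ω)) ⁻¹' {x}) = 0 := by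
      refine measure_mono_null ?_ (ae_iff.1 hsupp)
      intro ω hω
      have hω' : (X ω, Y ω) = x := hω
      simpa [hω'] using hxR
    simp [r, prob, this]
  have deg_sum : ∀ a, ∑ b, (if (a, b) ∈ R then (1 : ℝ) else 0) = degA R a := by
    intro a
    rw [Finset.sum_boole, degA]
    congr 1
    refine Finset.card_bij (fun b _ => (a, b)) ?_ ?_ ?_
    · intro b hb; simpa using hb
    · intro b _ b' _ h; exact (Prod.mk.inj h).2
    · rintro ⟨a', b⟩ hx
      obtain ⟨h1, h2⟩ := Finset.mem_filter.1 hx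
      obtain rfl : a' = a := h2
      exact ⟨b, by simpa using h1, rfl⟩
  have deg_pos : ∀ a, q a ≠ 0 → (0 : ℝ) < degA R a := by
    intro a ha
    rw [← r_sum] at ha
    obtain ⟨b, _, hb⟩ := Finset.exists_ne_zero_of_sum_ne_zero ha
    exact_mod_cast Finset.card_pos.2 ⟨(a, b), by simpa using r_supp _ hb⟩
  have fibre : ∀ a, -∑ b, r (a, b) * Real.log (r (a, b)) ≤
      q a * (Real.log (degA R a) - Real.log (q a)) := by
    intro a
    have h := sum_mul_log_sub_log_le Finset.univ (fun b => r (a, b))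
      (fun b => if (a, b) ∈ R then (1 : ℝ) else 0) (fun b _ => r_nonneg _)
      (fun b _ => by positivity) (fun b _ hb => by simp [r_supp _ hb])
    simp only [deg_sum, r_sum] at h
    refine le_trans (le_of_eq ?_) h
    rw [← Finset.sum_neg_distrib]
    refine Finset.sum_congr rfl fun b _ => ?_
    -- The indicator is `0` or `1`, so its logarithm vanishes either way.
    split_ifs <;> simp
  have cond_le : condEntropy μ Y X ≤ ∑ a, q a * Real.log (degA R a) := by
    have h := Finset.sum_le_sum fun a (_ : a ∈ Finset.univ) => fibre a
    simp only [mul_sub, Finset.sum_sub_distrib, Finset.sum_neg_distrib] at h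
    simp only [condEntropy, entropy, Fintype.sum_prod_type, ← hq, ← hr]
    linarith
  have final := sum_mul_log_sub_log_le Finset.univ q (fun a => (degA R a : ℝ) ^ p)
    (fun a _ => q_nonneg a) (fun a _ => by positivity)
    (fun a _ ha => Real.rpow_pos_of_pos (deg_pos a ha) p)
  rw [q_sum, Real.log_one, sub_zero, one_mul] at final
  refine le_trans ?_ final
  have expand : ∑ a, q a * (Real.log ((degA R a : ℝ) ^ p) - Real.log (q a)) =
      entropy μ X + p * ∑ a, q a * Real.log (degA R a) := by
    rw [entropy, Finset.mul_sum, ← Finset.sum_neg_distrib, ← Finset.sum_add_distrib]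
    refine Finset.sum_congr rfl fun a _ => ?_
    by_cases ha : q a = 0
    · simp [ha, ← hq]
    · rw [Real.log_rpow (deg_pos a ha), ← hq]
      ring
  rw [expand]
  gcongr
end

section
/- Let p, q ≥ 1 be real numbers, let R be a finite relation between finite types A and B, and let (X, Y) be any pair of random variables supported on R. Then p·H(Y|X) + I(X;Y) + q·H(X|Y) ≤ ln M_{p,q}(R), where M_{p,q}(R) := Σ_{(a,b) ∈ R} deg_R(a)^{p−1} · deg_R(b)^{q−1} is the bivariate moment of R (real powers). -/
/-!
Since `I(X;Y) = H(X,Y) - H(Y|X) - H(X|Y)`, the left-hand side equals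
`H(X,Y) + (p-1) H(Y|X) + (q-1) H(X|Y)`. Given `X = a`, the variable `Y` takes at most `deg_R(a)`
values, so `H(Y|X) ≤ ∑ P(a,b) log deg_R(a)`, and symmetrically for `H(X|Y)`
(`fiber_entropy_le`). As `p - 1, q - 1 ≥ 0`, the left-hand side is at most
`∑ P(x) (log w(x) - log P(x))` with `w(a,b) = deg_R(a)^(p-1) deg_R(b)^(q-1)`, and by Gibbs'
inequality this is at most `log ∑ w = log M_{p,q}(R)`. The fiberwise bound is also an instance of
Gibbs' inequality, in the version `gibbs` for a nonnegative weight of arbitrary total mass.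
-/

open MeasureTheory Finset

/-- The bivariate moment `M_{p,q}(R) = ∑_{(a,b) ∈ R} deg_R(a)^(p-1) · deg_R(b)^(q-1)`. -/
noncomputable def biMoment {A B : Type*} [DecidableEq A] [DecidableEq B]
    (p q : ℝ) (R : Finset (A × B)) : ℝ :=
  ∑ x ∈ R, (degA R x.1 : ℝ) ^ (p - 1) * (degB R x.2 : ℝ) ^ (q - 1)

/-- Gibbs' inequality for a nonnegative weight `P` of arbitrary total mass: `P` is compared with
the multiple of `w` of the same mass. -/
lemma gibbs {ι : Type*} (s : Finset ι) (P w : ι → ℝ) (hP : ∀ i ∈ s, 0 ≤ P i)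
    (hw : ∀ i ∈ s, 0 < w i) :
    ∑ i ∈ s, P i * (Real.log (w i) - Real.log (P i)) ≤
      (∑ i ∈ s, P i) * (Real.log (∑ i ∈ s, w i) - Real.log (∑ i ∈ s, P i)) := by
  set m := ∑ i ∈ s, P i with hm
  set W := ∑ i ∈ s, w i with hW
  rcases (Finset.sum_nonneg hP).eq_or_lt with h0 | hpos
  · have hz := (Finset.sum_eq_zero_iff_of_nonneg hP).1 h0.symm
    rw [Finset.sum_eq_zero (fun i hi => by rw [hz i hi, zero_mul]), hm, ← h0, zero_mul]
  · have hmpos : 0 < m := hpos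
    have hs : s.Nonempty := by
      by_contra h
      rw [Finset.not_nonempty_iff_eq_empty] at h
      simp [h] at hpos
    have hWpos : 0 < W := Finset.sum_pos hw hs
    have key : ∀ i ∈ s, P i * (Real.log (w i) - Real.log (P i)) ≤
        P i * (Real.log W - Real.log m) + (w i * (m / W) - P i) := by
      intro i hi
      rcases (hP i hi).eq_or_lt with h | h
      · rw [← h]
        have := hw i hi
        simp only [zero_mul, zero_add, sub_zero]
        positivity
      · have hwi := hw i hi
        -- `log t ≤ t - 1` at the ratio of the two weights
        have hl := Real.log_le_sub_one_of_pos (x := w i * m / (P i * W)) (by positivity)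
        rw [Real.log_div (by positivity) (by positivity), Real.log_mul hwi.ne' hmpos.ne',
          Real.log_mul h.ne' hWpos.ne'] at hl
        have h2 := mul_le_mul_of_nonneg_left hl h.le
        have h3 : P i * (w i * m / (P i * W) - 1) = w i * (m / W) - P i := by
          field_simp
        rw [h3] at h2
        linarith
    refine (Finset.sum_le_sum key).trans (le_of_eq ?_)
    rw [Finset.sum_add_distrib, Finset.sum_sub_distrib, ← Finset.sum_mul, ← Finset.sum_mul,
      ← hm, ← hW]
    field_simp
    ring

/-- The conditional entropy given `g` is at most the mean logarithm of the size of the fiber of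
`g`: Gibbs' inequality on each fiber, compared with the uniform weight. -/
lemma fiber_entropy_le {ι κ : Type*} [Fintype κ] [DecidableEq κ] (R : Finset ι) (g : ι → κ)
    (P : ι → ℝ) (hP : ∀ i, 0 ≤ P i) :
    ∑ c, (∑ i ∈ R with g i = c, P i) * Real.log (∑ i ∈ R with g i = c, P i)
      - ∑ i ∈ R, P i * Real.log (P i) ≤
    ∑ i ∈ R, P i * Real.log ((R.filter fun j => g j = g i).card : ℝ) := by
  rw [← Finset.sum_fiberwise R g (fun i => P i * Real.log (P i)),
    ← Finset.sum_fiberwise R g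
      (fun i => P i * Real.log ((R.filter fun j => g j = g i).card : ℝ)),
    ← Finset.sum_sub_distrib]
  refine Finset.sum_le_sum fun c _ => ?_
  have h := gibbs (R.filter fun i => g i = c) P (fun _ => 1) (fun i _ => hP i)
    (fun _ _ => one_pos)
  have h2 : ∑ i ∈ R with g i = c, P i * Real.log ((R.filter fun j => g j = g i).card : ℝ) =
      (∑ i ∈ R with g i = c, P i) * Real.log ((R.filter fun j => g j = c).card : ℝ) := by
    rw [Finset.sum_mul]
    refine Finset.sum_congr rfl fun i hi => ?_
    rw [(Finset.mem_filter.1 hi).2]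
  rw [h2]
  simp only [Real.log_one, zero_sub, mul_neg, Finset.sum_neg_distrib, Finset.sum_const,
    nsmul_eq_mul, mul_one, mul_sub] at h
  linarith

/-- The law of `g ∘ Z` as a marginal of the law of `Z`, when `Z` is supported on `R`. -/
lemma prob_comp_eq_sum {Ω ι κ : Type*} [MeasurableSpace Ω] [MeasurableSpace ι]
    [MeasurableSingletonClass ι] [DecidableEq κ] (μ : Measure Ω) [IsProbabilityMeasure μ]
    (Z : Ω → ι) (hZ : Measurable Z) (R : Finset ι) (hR : ∀ᵐ ω ∂μ, Z ω ∈ R)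
    (g : ι → κ) (c : κ) :
    prob μ (fun ω => g (Z ω)) c = ∑ i ∈ R with g i = c, prob μ Z i := by
  unfold prob
  rw [← ENNReal.toReal_sum (fun _ _ => measure_ne_top _ _),
    ← measure_biUnion_finset]
  · congr 1
    refine measure_congr ?_
    filter_upwards [hR] with ω hω
    refine propext ?_
    change g (Z ω) = c ↔ ω ∈ ⋃ i ∈ R.filter (fun i => g i = c), Z ⁻¹' {i}
    simp [hω]
  · intro i _ j _ hij
    exact Disjoint.preimage _ (by simpa using hij)
  · exact fun i _ => hZ (measurableSet_singleton i)

lemma prob_eq_zero_of_notMem {Ω ι : Type*} [MeasurableSpace Ω] (μ : Measure Ω)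
    (Z : Ω → ι) (R : Finset ι) (hR : ∀ᵐ ω ∂μ, Z ω ∈ R) {i : ι} (hi : i ∉ R) :
    prob μ Z i = 0 := by
  unfold prob
  rw [measure_eq_zero_iff_ae_notMem.2, ENNReal.toReal_zero]
  filter_upwards [hR] with ω hω h
  exact hi (Set.mem_singleton_iff.1 h ▸ hω)

lemma entropy_pair_swap {Ω A B : Type*} [MeasurableSpace Ω] [Fintype A] [Fintype B]
    (μ : Measure Ω) (X : Ω → A) (Y : Ω → B) :
    entropy μ (fun ω => (Y ω, X ω)) = entropy μ (fun ω => (X ω, Y ω)) := by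
  unfold entropy
  congr 1
  refine Fintype.sum_equiv (Equiv.prodComm B A) _ _ fun x => ?_
  have h : prob μ (fun ω => (Y ω, X ω)) x =
      prob μ (fun ω => (X ω, Y ω)) (Equiv.prodComm B A x) := by
    unfold prob
    congr 2
    ext ω
    simp [Prod.ext_iff, and_comm]
  rw [h]

/-- bi-star bound, Theorem 3 of the previous work:
for `p, q ≥ 1` and `(X, Y)` supported on `R`,
`p·H(Y|X) + I(X;Y) + q·H(X|Y) ≤ ln M_{p,q}(R)`. -/
theorem stmt2 {Ω : Type*} [MeasurableSpace Ω]
    {A B : Type*} [Fintype A] [Fintype B] [DecidableEq A] [DecidableEq B]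
    [MeasurableSpace A] [MeasurableSingletonClass A]
    [MeasurableSpace B] [MeasurableSingletonClass B]
    (p q : ℝ) (hp : 1 ≤ p) (hq : 1 ≤ q) (R : Finset (A × B))
    (μ : Measure Ω) [IsProbabilityMeasure μ]
    (X : Ω → A) (Y : Ω → B) (hX : Measurable X) (hY : Measurable Y)
    (hsupp : ∀ᵐ ω ∂μ, (X ω, Y ω) ∈ R) :
    p * condEntropy μ Y X + mutualInfo μ X Y + q * condEntropy μ X Y ≤
      Real.log (biMoment p q R) := by
  set Z : Ω → A × B := fun ω => (X ω, Y ω)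
  have hZ : Measurable Z := hX.prodMk hY
  set P : A × B → ℝ := prob μ Z
  have hP : ∀ x, 0 ≤ P x := fun x => ENNReal.toReal_nonneg
  have hHZ : entropy μ Z = - ∑ x ∈ R, P x * Real.log (P x) := by
    unfold entropy
    congr 1
    refine (Finset.sum_subset (Finset.subset_univ R) fun x _ hx => ?_).symm
    rw [prob_eq_zero_of_notMem μ Z R hsupp hx, zero_mul]
  have hHX : entropy μ X = - ∑ a, (∑ x ∈ R with x.1 = a, P x) *
      Real.log (∑ x ∈ R with x.1 = a, P x) := by
    unfold entropy
    congr 1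
    refine Finset.sum_congr rfl fun a _ => ?_
    have h : prob μ X a = ∑ x ∈ R with x.1 = a, P x :=
      prob_comp_eq_sum μ Z hZ R hsupp Prod.fst a
    rw [h]
  have hHY : entropy μ Y = - ∑ b, (∑ x ∈ R with x.2 = b, P x) *
      Real.log (∑ x ∈ R with x.2 = b, P x) := by
    unfold entropy
    congr 1
    refine Finset.sum_congr rfl fun b _ => ?_
    have h : prob μ Y b = ∑ x ∈ R with x.2 = b, P x :=
      prob_comp_eq_sum μ Z hZ R hsupp Prod.snd b
    rw [h]
  have hsum : ∑ x ∈ R, P x = 1 := by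
    have h := prob_comp_eq_sum μ Z hZ R hsupp (fun _ => ()) ()
    simp only [Finset.filter_true] at h
    rw [← h]
    simp [prob]
  have hA := fiber_entropy_le R Prod.fst P hP
  have hB := fiber_entropy_le R Prod.snd P hP
  have hdA : ∀ x ∈ R, (0 : ℝ) < degA R x.1 := fun x hx =>
    Nat.cast_pos.2 (Finset.card_pos.2 ⟨x, Finset.mem_filter.2 ⟨hx, rfl⟩⟩)
  have hdB : ∀ x ∈ R, (0 : ℝ) < degB R x.2 := fun x hx =>
    Nat.cast_pos.2 (Finset.card_pos.2 ⟨x, Finset.mem_filter.2 ⟨hx, rfl⟩⟩)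
  have hG := gibbs R P (fun x => (degA R x.1 : ℝ) ^ (p - 1) * (degB R x.2 : ℝ) ^ (q - 1))
    (fun x _ => hP x)
    (fun x hx => mul_pos (Real.rpow_pos_of_pos (hdA x hx) _) (Real.rpow_pos_of_pos (hdB x hx) _))
  rw [hsum, Real.log_one, sub_zero, one_mul] at hG
  have hsplit : ∑ x ∈ R, P x * (Real.log ((degA R x.1 : ℝ) ^ (p - 1) *
        (degB R x.2 : ℝ) ^ (q - 1)) - Real.log (P x)) =
      (p - 1) * ∑ x ∈ R, P x * Real.log (degA R x.1 : ℝ) +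
      (q - 1) * ∑ x ∈ R, P x * Real.log (degB R x.2 : ℝ) -
      ∑ x ∈ R, P x * Real.log (P x) := by
    rw [Finset.mul_sum, Finset.mul_sum, ← Finset.sum_add_distrib, ← Finset.sum_sub_distrib]
    refine Finset.sum_congr rfl fun x hx => ?_
    rw [Real.log_mul (Real.rpow_pos_of_pos (hdA x hx) _).ne'
      (Real.rpow_pos_of_pos (hdB x hx) _).ne', Real.log_rpow (hdA x hx),
      Real.log_rpow (hdB x hx)]
    ring
  rw [hsplit] at hG
  have hYX : entropy μ Z - entropy μ X ≤ ∑ x ∈ R, P x * Real.log (degA R x.1 : ℝ) := by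
    rw [hHZ, hHX]
    unfold degA
    linarith
  have hXY : entropy μ Z - entropy μ Y ≤ ∑ x ∈ R, P x * Real.log (degB R x.2 : ℝ) := by
    rw [hHZ, hHY]
    unfold degB
    linarith
  have h1 := mul_le_mul_of_nonneg_left hYX (sub_nonneg.2 hp)
  have h2 := mul_le_mul_of_nonneg_left hXY (sub_nonneg.2 hq)
  unfold condEntropy mutualInfo biMoment
  rw [entropy_pair_swap μ X Y]
  change p * (entropy μ Z - entropy μ X) + (entropy μ X + entropy μ Y - entropy μ Z) +
    q * (entropy μ Z - entropy μ Y) ≤ _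
  linarith
end

section
/- Let p, q, r, s ≥ 1 be real numbers and 0 < w < 1. Let R be a finite relation between finite types A and B. Then M_{p,q}(R)^w · M_{r,s}(R)^{1−w} ≥ M_{wp+(1−w)r, wq+(1−w)s}(R); that is, ln M_{p,q}(R) is convex in (p, q). -/
/-!
Log-convexity of the bivariate moment is Hölder's inequality over the pairs of `R`. For
`(a, b) ∈ R` both degrees are positive, so the summand of `M_{wp+(1-w)r, wq+(1-w)s}` factors as
`F ^ w * G ^ (1 - w)`, where `F` and `G` are the summands of `M_{p,q}` and `M_{r,s}`. Hölder with
the conjugate exponents `1 / w` and `1 / (1 - w)` then bounds the sum.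
-/

open Finset

/-- Hölder's inequality with weights `w` and `1 - w` in place of conjugate exponents. -/
lemma sum_rpow_mul_rpow_le {ι : Type*} (t : Finset ι) (F G : ι → ℝ) (w : ℝ)
    (hw0 : 0 < w) (hw1 : w < 1) (hF : ∀ i ∈ t, 0 ≤ F i) (hG : ∀ i ∈ t, 0 ≤ G i) :
    ∑ i ∈ t, F i ^ w * G i ^ (1 - w) ≤ (∑ i ∈ t, F i) ^ w * (∑ i ∈ t, G i) ^ (1 - w) := by
  have hw1' : 0 < 1 - w := sub_pos.2 hw1
  have hconj : Real.HolderConjugate w⁻¹ (1 - w)⁻¹ :=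
    Real.holderConjugate_iff.2 ⟨(one_lt_inv₀ hw0).2 hw1, by simp⟩
  have key := Real.inner_le_Lp_mul_Lq_of_nonneg t (f := fun i => F i ^ w)
    (g := fun i => G i ^ (1 - w)) hconj
    (fun i hi => Real.rpow_nonneg (hF i hi) _) (fun i hi => Real.rpow_nonneg (hG i hi) _)
  have eF : ∑ i ∈ t, (F i ^ w) ^ w⁻¹ = ∑ i ∈ t, F i :=
    sum_congr rfl fun i hi => Real.rpow_rpow_inv (hF i hi) hw0.ne'
  have eG : ∑ i ∈ t, (G i ^ (1 - w)) ^ (1 - w)⁻¹ = ∑ i ∈ t, G i :=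
    sum_congr rfl fun i hi => Real.rpow_rpow_inv (hG i hi) hw1'.ne'
  simpa only [eF, eG, one_div, inv_inv] using key

/-- log-convexity of bivariate moments:
`M_{p,q}(R)^w · M_{r,s}(R)^(1-w) ≥ M_{wp+(1-w)r, wq+(1-w)s}(R)`. -/
theorem stmt3 {A B : Type*} [Fintype A] [Fintype B] [DecidableEq A] [DecidableEq B]
    (p q r s w : ℝ) (hp : 1 ≤ p) (hq : 1 ≤ q) (hr : 1 ≤ r) (hs : 1 ≤ s)
    (hw0 : 0 < w) (hw1 : w < 1) (R : Finset (A × B)) :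
    biMoment p q R ^ w * biMoment r s R ^ (1 - w) ≥
      biMoment (w * p + (1 - w) * r) (w * q + (1 - w) * s) R := by
  unfold biMoment
  refine le_of_eq_of_le (sum_congr rfl fun x hx => ?_)
    (sum_rpow_mul_rpow_le R _ _ w hw0 hw1 (fun x _ => by positivity) (fun x _ => by positivity))
  have ha : (0 : ℝ) < degA R x.1 :=
    Nat.cast_pos.2 (card_pos.2 ⟨x, mem_filter.2 ⟨hx, rfl⟩⟩)
  have hb : (0 : ℝ) < degB R x.2 :=
    Nat.cast_pos.2 (card_pos.2 ⟨x, mem_filter.2 ⟨hx, rfl⟩⟩)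
  -- Positivity of the base is what allows exponents to be added in each degree.
  have split : ∀ d : ℝ, 0 < d → ∀ u v : ℝ,
      d ^ (w * u + (1 - w) * v - 1) = (d ^ (u - 1)) ^ w * (d ^ (v - 1)) ^ (1 - w) := by
    intro d hd u v
    rw [← Real.rpow_mul hd.le, ← Real.rpow_mul hd.le, ← Real.rpow_add hd]
    congr 1
    ring
  rw [split _ ha, split _ hb, Real.mul_rpow (by positivity) (by positivity),
    Real.mul_rpow (by positivity) (by positivity)]
  ring
end

section
/- Let p, q, r, s, t ≥ 0 be real numbers, let R be a finite relation between finite types A and B, and let (X, Y) be any pair of random variables supported on R. Then (p + r + t + 2)·H(Y|X) + I(X;Y) + (q + s + 3)·H(X|Y) ≤ ln W_{p,q,r,s,t}(R), where W_{p,q,r,s,t}(R) := Σ over quintuples (a,b,c,d,e) with (a,b) ∈ R, (c,b) ∈ R, (c,d) ∈ R, and (e,d) ∈ R of deg_R(a)^p · deg_R(b)^q · deg_R(c)^r · deg_R(d)^s · deg_R(e)^t. -/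
/-!
The proof peels the path `a - b - c - d - e` off one vertex at a time, starting from `e`. Each stage
carries a weight on one side of the relation: from `u` on `α` one passes to
`v b = deg b ^ k * ∑ a ~ b, u a` on `β`. Applying the log-sum inequality (the Gibbs inequality)
conditionally on `Y = b` gives
`E log v(Y) ≥ (k + 1) H(X|Y) + E log u(X)` (`gibbs_stepWeight`): one summand `H(X|Y)` comes from the
sum over `a`, and `k` further ones from `E log deg(Y) ≥ H(X|Y)`, which is the same inequality for
`u = 1`. Four stages, alternating sides, lead to a weight `u₄` on `A` whose total mass is `W`, and
a last Gibbs inequality `H(X) + E log u₄(X) ≤ log ∑ a, u₄ a`, with `H(X) = I(X;Y) + H(X|Y)`,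
yields the bound.
-/

open MeasureTheory Finset

/-- The caterpillar moment `V_{p,q,r}(R)`, summing over 3-vertex paths
`(a, b, c)` with `(a,b) ∈ R` and `(c,b) ∈ R`. -/
noncomputable def Vmom {A B : Type*} [Fintype A] [Fintype B]
    [DecidableEq A] [DecidableEq B] (p q r : ℝ) (R : Finset (A × B)) : ℝ :=
  ∑ a : A, ∑ b : B, ∑ c : A,
    if (a, b) ∈ R ∧ (c, b) ∈ R then
      (degA R a : ℝ) ^ p * (degB R b : ℝ) ^ q * (degA R c : ℝ) ^ r
    else 0

/-- The caterpillar moment `N_{p,q,r,s}(R)`, summing over 4-vertex paths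
`(a, b, c, d)` with `(a,b) ∈ R`, `(c,b) ∈ R`, and `(c,d) ∈ R`. -/
noncomputable def Nmom {A B : Type*} [Fintype A] [Fintype B]
    [DecidableEq A] [DecidableEq B] (p q r s : ℝ) (R : Finset (A × B)) : ℝ :=
  ∑ a : A, ∑ b : B, ∑ c : A, ∑ d : B,
    if (a, b) ∈ R ∧ (c, b) ∈ R ∧ (c, d) ∈ R then
      (degA R a : ℝ) ^ p * (degB R b : ℝ) ^ q * (degA R c : ℝ) ^ r *
        (degB R d : ℝ) ^ s
    else 0

/-- The caterpillar moment `W_{p,q,r,s,t}(R)`, summing over 5-vertex paths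
`(a, b, c, d, e)` with `(a,b) ∈ R`, `(c,b) ∈ R`, `(c,d) ∈ R`, and `(e,d) ∈ R`. -/
noncomputable def Wmom {A B : Type*} [Fintype A] [Fintype B]
    [DecidableEq A] [DecidableEq B] (p q r s t : ℝ) (R : Finset (A × B)) : ℝ :=
  ∑ a : A, ∑ b : B, ∑ c : A, ∑ d : B, ∑ e : A,
    if (a, b) ∈ R ∧ (c, b) ∈ R ∧ (c, d) ∈ R ∧ (e, d) ∈ R then
      (degA R a : ℝ) ^ p * (degB R b : ℝ) ^ q * (degA R c : ℝ) ^ r *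
        (degB R d : ℝ) ^ s * (degA R e : ℝ) ^ t
    else 0

/-- The log-sum inequality for unnormalised `x`, in a form valid also when `∑ x = 0`. -/
lemma log_sum_ineq {ι : Type*} [Fintype ι] (x w : ι → ℝ) (hx : ∀ i, 0 ≤ x i) (hw : ∀ i, 0 ≤ w i)
    (hxw : ∀ i, 0 < x i → 0 < w i) :
    ∑ i, x i * Real.log (w i) - ∑ i, x i * Real.log (x i)
      + (∑ i, x i) * Real.log (∑ i, x i) ≤ (∑ i, x i) * Real.log (∑ i, w i) := by
  set T := ∑ i, x i with hT
  set V := ∑ i, w i with hV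
  rcases (Finset.sum_nonneg fun i _ => hx i : 0 ≤ T).eq_or_lt with h0 | hTpos
  · have hz : ∀ i, x i = 0 := fun i =>
      (Finset.sum_eq_zero_iff_of_nonneg fun i _ => hx i).1 h0.symm i (Finset.mem_univ i)
    rw [← hT] at h0
    simp [← h0, hz]
  have hVpos : 0 < V := by
    obtain ⟨i, -, hi⟩ := Finset.exists_lt_of_sum_lt (s := Finset.univ) (f := fun _ : ι => (0 : ℝ))
      (g := x) (by simpa using hTpos)
    exact Finset.sum_pos' (fun i _ => hw i) ⟨i, Finset.mem_univ i, hxw i hi⟩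
  -- termwise `log y ≤ y - 1` at `y = w i * T / (x i * V)`
  have key : ∀ i, x i * Real.log (w i) - x i * Real.log (x i) + x i * Real.log T
      - x i * Real.log V ≤ w i * (T / V) - x i := by
    intro i
    rcases (hx i).eq_or_lt with h | h
    · rw [← h]
      have := mul_nonneg (hw i) (div_nonneg hTpos.le hVpos.le)
      simpa using this
    · have hwi := hxw i h
      have h1 := Real.log_le_sub_one_of_pos (x := w i * T / (x i * V)) (by positivity)
      rw [Real.log_div (by positivity) (by positivity), Real.log_mul hwi.ne' hTpos.ne',
        Real.log_mul h.ne' hVpos.ne'] at h1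
      have h2 := mul_le_mul_of_nonneg_left h1 h.le
      have h3 : x i * (w i * T / (x i * V) - 1) = w i * (T / V) - x i := by
        field_simp
      rw [h3] at h2
      linarith
  have hsum := Finset.sum_le_sum fun i (_ : i ∈ Finset.univ) => key i
  simp only [Finset.sum_sub_distrib, Finset.sum_add_distrib, ← Finset.sum_mul] at hsum
  rw [← hT, ← hV, mul_div_cancel₀ _ hVpos.ne'] at hsum
  linarith

/-- The weight on `β` obtained from a weight `u` on `α` by summing over the neighbours and
multiplying with the `k`-th power of the degree. -/
noncomputable def stepWeight {α β : Type*} [Fintype α] (S : α → β → Prop)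
    [∀ a b, Decidable (S a b)] (k : ℝ) (u : α → ℝ) (b : β) : ℝ :=
  (∑ a, if S a b then (1 : ℝ) else 0) ^ k * ∑ a, if S a b then u a else 0

section Step

variable {α β : Type*} [Fintype α] {S : α → β → Prop}
  [∀ a b, Decidable (S a b)] {f : α → β → ℝ} {u : α → ℝ}

lemma stepWeight_nonneg (k : ℝ) (hu : ∀ a, 0 ≤ u a) (b : β) : 0 ≤ stepWeight S k u b := by
  refine mul_nonneg (Real.rpow_nonneg (Finset.sum_nonneg fun a _ => ?_) _)
    (Finset.sum_nonneg fun a _ => ?_)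
  · split_ifs <;> norm_num
  · split_ifs
    exacts [hu a, le_rfl]

variable [Fintype β]

lemma neighbourSum_pos (hf : ∀ a b, 0 ≤ f a b) (hS : ∀ a b, 0 < f a b → S a b)
    (hu : ∀ a, 0 ≤ u a) (hu' : ∀ a, 0 < ∑ b, f a b → 0 < u a) (b : β)
    (hb : 0 < ∑ a, f a b) : 0 < ∑ a, if S a b then u a else 0 := by
  obtain ⟨a, -, ha⟩ := Finset.exists_lt_of_sum_lt (s := Finset.univ) (f := fun _ : α => (0 : ℝ))
    (g := fun a => f a b) (by simpa using hb)
  refine Finset.sum_pos' (fun a _ => ?_) ⟨a, Finset.mem_univ a, ?_⟩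
  · split_ifs
    exacts [hu a, le_rfl]
  · rw [if_pos (hS a b ha)]
    exact hu' a (Finset.sum_pos' (fun b _ => hf a b) ⟨b, Finset.mem_univ b, ha⟩)

lemma stepWeight_pos (k : ℝ) (hf : ∀ a b, 0 ≤ f a b) (hS : ∀ a b, 0 < f a b → S a b)
    (hu : ∀ a, 0 ≤ u a) (hu' : ∀ a, 0 < ∑ b, f a b → 0 < u a) (b : β)
    (hb : 0 < ∑ a, f a b) : 0 < stepWeight S k u b :=
  mul_pos (Real.rpow_pos_of_pos (neighbourSum_pos (u := fun _ => 1) hf hS (fun _ => zero_le_one)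
    (fun _ _ => one_pos) b hb) _) (neighbourSum_pos hf hS hu hu' b hb)

/-- The Gibbs inequality conditionally on the second coordinate:
`H(X|Y) + E log u(X) ≤ E log ∑ a ~ Y, u a` when `(X, Y)` has joint mass function `f`. -/
lemma gibbs_neighbourSum (hf : ∀ a b, 0 ≤ f a b) (hS : ∀ a b, 0 < f a b → S a b)
    (hu : ∀ a, 0 ≤ u a) (hu' : ∀ a, 0 < ∑ b, f a b → 0 < u a) :
    (∑ b, (∑ a, f a b) * Real.log (∑ a, f a b) - ∑ a, ∑ b, f a b * Real.log (f a b))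
      + ∑ a, (∑ b, f a b) * Real.log (u a)
      ≤ ∑ b, (∑ a, f a b) * Real.log (∑ a, if S a b then u a else 0) := by
  have h := Finset.sum_le_sum fun b (_ : b ∈ Finset.univ) =>
    log_sum_ineq (fun a => f a b) (fun a => if S a b then u a else 0) (fun a => hf a b)
      (fun a => by split_ifs; exacts [hu a, le_rfl])
      (fun a ha => by
        rw [if_pos (hS a b ha)]
        exact hu' a (Finset.sum_pos' (fun b _ => hf a b) ⟨b, Finset.mem_univ b, ha⟩))
  have e1 : ∑ b, ∑ a, f a b * Real.log (if S a b then u a else 0)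
      = ∑ a, (∑ b, f a b) * Real.log (u a) := by
    rw [Finset.sum_comm]
    refine Finset.sum_congr rfl fun a _ => ?_
    rw [Finset.sum_mul]
    refine Finset.sum_congr rfl fun b _ => ?_
    rcases (hf a b).eq_or_lt with h0 | h0
    · simp [← h0]
    · rw [if_pos (hS a b h0)]
  simp only [Finset.sum_add_distrib, Finset.sum_sub_distrib] at h
  rw [e1, Finset.sum_comm (f := fun b a => f a b * Real.log (f a b))] at h
  linarith

/-- One stage of the peeling: `(k + 1) H(X|Y) + E log u(X) ≤ E log v(Y)` for
`v = stepWeight S k u`. -/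
lemma gibbs_stepWeight {k : ℝ} (hk : 0 ≤ k) (hf : ∀ a b, 0 ≤ f a b)
    (hS : ∀ a b, 0 < f a b → S a b)
    (hu : ∀ a, 0 ≤ u a) (hu' : ∀ a, 0 < ∑ b, f a b → 0 < u a) :
    (k + 1) * (∑ b, (∑ a, f a b) * Real.log (∑ a, f a b) - ∑ a, ∑ b, f a b * Real.log (f a b))
      + ∑ a, (∑ b, f a b) * Real.log (u a)
      ≤ ∑ b, (∑ a, f a b) * Real.log (stepWeight S k u b) := by
  have h1 := gibbs_neighbourSum hf hS hu hu'
  have h2 := mul_le_mul_of_nonneg_left (gibbs_neighbourSum (u := fun _ => 1) hf hS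
    (fun _ => zero_le_one) (fun _ _ => one_pos)) hk
  have e : ∑ b, (∑ a, f a b) * Real.log (stepWeight S k u b)
      = k * ∑ b, (∑ a, f a b) * Real.log (∑ a, if S a b then (1 : ℝ) else 0)
        + ∑ b, (∑ a, f a b) * Real.log (∑ a, if S a b then u a else 0) := by
    rw [Finset.mul_sum, ← Finset.sum_add_distrib]
    refine Finset.sum_congr rfl fun b _ => ?_
    rcases (Finset.sum_nonneg fun a _ => hf a b : 0 ≤ ∑ a, f a b).eq_or_lt with h0 | h0
    · simp [← h0]
    · have p1 := neighbourSum_pos (u := fun _ => 1) hf hS (fun _ => zero_le_one)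
        (fun _ _ => one_pos) b h0
      have p2 := neighbourSum_pos hf hS hu hu' b h0
      rw [stepWeight, Real.log_mul (Real.rpow_pos_of_pos p1 _).ne' p2.ne', Real.log_rpow p1]
      ring
  simp only [Real.log_one, mul_zero, Finset.sum_const_zero, add_zero] at h2
  rw [e]
  linarith

end Step

lemma degA_eq_sum {A B : Type*} [Fintype B] [DecidableEq A] [DecidableEq B]
    (R : Finset (A × B)) (a : A) :
    (degA R a : ℝ) = ∑ b, if (a, b) ∈ R then (1 : ℝ) else 0 := by
  rw [Finset.sum_boole, degA]
  congr 1
  refine Finset.card_bij' (fun x _ => x.2) (fun b _ => (a, b)) ?_ ?_ ?_ ?_ <;> aesop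

lemma degB_eq_sum {A B : Type*} [Fintype A] [DecidableEq A] [DecidableEq B]
    (R : Finset (A × B)) (b : B) :
    (degB R b : ℝ) = ∑ a, if (a, b) ∈ R then (1 : ℝ) else 0 := by
  rw [Finset.sum_boole, degB]
  congr 1
  refine Finset.card_bij' (fun x _ => x.1) (fun a _ => (a, b)) ?_ ?_ ?_ ?_ <;> aesop

/-- The total mass of the weight produced by the four stages is `W`. -/
lemma Wmom_eq_sum_stepWeight {A B : Type*} [Fintype A] [Fintype B]
    [DecidableEq A] [DecidableEq B] (p q r s t : ℝ) (R : Finset (A × B)) :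
    Wmom p q r s t R = ∑ a, stepWeight (fun b a => (a, b) ∈ R) p
      (stepWeight (fun a b => (a, b) ∈ R) q (stepWeight (fun b a => (a, b) ∈ R) r
        (stepWeight (fun a b => (a, b) ∈ R) s fun e => (degA R e : ℝ) ^ t))) a := by
  simp only [Wmom, stepWeight, ← degA_eq_sum, ← degB_eq_sum]
  refine Finset.sum_congr rfl fun a _ => ?_
  rw [Finset.mul_sum]
  refine Finset.sum_congr rfl fun b _ => ?_
  by_cases hab : (a, b) ∈ R
  swap
  · simp [hab]
  simp only [hab, true_and, if_true]
  rw [← mul_assoc, Finset.mul_sum]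
  refine Finset.sum_congr rfl fun c _ => ?_
  by_cases hcb : (c, b) ∈ R
  swap
  · simp [hcb]
  simp only [hcb, true_and, if_true]
  rw [← mul_assoc, Finset.mul_sum]
  refine Finset.sum_congr rfl fun d _ => ?_
  by_cases hcd : (c, d) ∈ R
  swap
  · simp [hcd]
  simp only [hcd, true_and, if_true]
  rw [← mul_assoc, Finset.mul_sum]
  refine Finset.sum_congr rfl fun e _ => ?_
  by_cases hed : (e, d) ∈ R <;> simp [hed]

lemma sum_prob_inter {Ω β : Type*} [MeasurableSpace Ω] [Fintype β] [MeasurableSpace β]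
    [MeasurableSingletonClass β] (μ : Measure Ω) [IsProbabilityMeasure μ] {Y : Ω → β}
    (hY : Measurable Y) (s : Set Ω) :
    ∑ b, (μ (s ∩ Y ⁻¹' {b})).toReal = (μ s).toReal := by
  classical
  rw [← ENNReal.toReal_sum fun _ _ => measure_ne_top _ _]
  congr 1
  have h := sum_measure_preimage_singleton (μ := μ.restrict s) (f := Y) Finset.univ
    (fun b _ => hY (measurableSet_singleton b))
  simp only [Measure.restrict_apply (hY (measurableSet_singleton _)), Set.inter_comm _ s] at h
  rw [h]
  simp

/-- caterpillar bound for `W`: for `p, q, r, s, t ≥ 0` and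
`(X, Y)` supported on `R`,
`(p+r+t+2)·H(Y|X) + I(X;Y) + (q+s+3)·H(X|Y) ≤ ln W_{p,q,r,s,t}(R)`. -/
theorem stmt6 {Ω : Type*} [MeasurableSpace Ω]
    {A B : Type*} [Fintype A] [Fintype B] [DecidableEq A] [DecidableEq B]
    [MeasurableSpace A] [MeasurableSingletonClass A]
    [MeasurableSpace B] [MeasurableSingletonClass B]
    (p q r s t : ℝ) (hp : 0 ≤ p) (hq : 0 ≤ q) (hr : 0 ≤ r) (hs : 0 ≤ s)
    (ht : 0 ≤ t) (R : Finset (A × B))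
    (μ : Measure Ω) [IsProbabilityMeasure μ]
    (X : Ω → A) (Y : Ω → B) (hX : Measurable X) (hY : Measurable Y)
    (hsupp : ∀ᵐ ω ∂μ, (X ω, Y ω) ∈ R) :
    (p + r + t + 2) * condEntropy μ Y X + mutualInfo μ X Y +
        (q + s + 3) * condEntropy μ X Y ≤
      Real.log (Wmom p q r s t R) := by
  set f : A → B → ℝ := fun a b => (μ (X ⁻¹' {a} ∩ Y ⁻¹' {b})).toReal with hfdef
  have hf : ∀ a b, 0 ≤ f a b := fun a b => ENNReal.toReal_nonneg
  have hA : ∀ a, prob μ X a = ∑ b, f a b := fun a => (sum_prob_inter μ hY _).symm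
  have hB : ∀ b, prob μ Y b = ∑ a, f a b := fun b => by
    rw [prob, ← sum_prob_inter μ hX]
    simp only [hfdef, Set.inter_comm]
  have hS : ∀ a b, 0 < f a b → (a, b) ∈ R := by
    intro a b hab
    by_contra hn
    have h0 : μ (X ⁻¹' {a} ∩ Y ⁻¹' {b}) = 0 := by
      refine measure_mono_null ?_ (ae_iff.1 hsupp)
      rintro ω ⟨h1, h2⟩
      simp only [Set.mem_preimage, Set.mem_singleton_iff] at h1 h2
      simpa [h1, h2] using hn
    simp [hfdef, h0] at hab
  have hone : ∑ a, ∑ b, f a b = 1 := by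
    simp_rw [← hA]
    have := sum_prob_inter μ hX Set.univ
    simpa [prob] using this
  have eX : entropy μ X = - ∑ a, (∑ b, f a b) * Real.log (∑ b, f a b) := by
    simp only [entropy, hA]
  have eY : entropy μ Y = - ∑ b, (∑ a, f a b) * Real.log (∑ a, f a b) := by
    simp only [entropy, hB]
  have eXY : entropy μ (fun ω => (X ω, Y ω)) = - ∑ a, ∑ b, f a b * Real.log (f a b) := by
    have h : ∀ a b, prob μ (fun ω => (X ω, Y ω)) (a, b) = f a b := fun a b => by
      simp only [prob, hfdef]
      congr 2
      ext ω
      simp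
    simp only [entropy, Fintype.sum_prod_type, h]
  have eYX : entropy μ (fun ω => (Y ω, X ω)) = - ∑ a, ∑ b, f a b * Real.log (f a b) := by
    have h : ∀ a b, prob μ (fun ω => (Y ω, X ω)) (b, a) = f a b := fun a b => by
      simp only [prob, hfdef]
      congr 2
      ext ω
      simp [and_comm]
    simp only [entropy, Fintype.sum_prod_type, h]
    rw [Finset.sum_comm]
  -- the transposed mass function, for the stages that go from `B` to `A`
  have hf' : ∀ b a, 0 ≤ (fun b a => f a b) b a := fun b a => hf a b
  have hS' : ∀ b a, 0 < (fun b a => f a b) b a → (a, b) ∈ R := fun b a => hS a b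
  set u₀ : A → ℝ := fun e => (degA R e : ℝ) ^ t with hu₀
  set u₁ := stepWeight (fun a b => (a, b) ∈ R) s u₀ with hu₁
  set u₂ := stepWeight (fun b a => (a, b) ∈ R) r u₁ with hu₂
  set u₃ := stepWeight (fun a b => (a, b) ∈ R) q u₂ with hu₃
  set u₄ := stepWeight (fun b a => (a, b) ∈ R) p u₃ with hu₄
  have hdeg : ∀ a, 0 < ∑ b, f a b → 0 < (degA R a : ℝ) := fun a ha => by
    rw [degA_eq_sum]
    exact neighbourSum_pos (S := fun b a => (a, b) ∈ R) (u := fun _ => 1) hf' hS'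
      (fun _ => zero_le_one) (fun _ _ => one_pos) a ha
  have n0 : ∀ a, 0 ≤ u₀ a := fun a => by positivity
  have p0 : ∀ a, 0 < ∑ b, f a b → 0 < u₀ a := fun a ha => Real.rpow_pos_of_pos (hdeg a ha) _
  have n1 : ∀ b, 0 ≤ u₁ b := stepWeight_nonneg s n0
  have p1 := stepWeight_pos s hf hS n0 p0
  have n2 : ∀ a, 0 ≤ u₂ a := stepWeight_nonneg r n1
  have p2 := stepWeight_pos (S := fun b a => (a, b) ∈ R) r hf' hS' n1 p1
  have n3 : ∀ b, 0 ≤ u₃ b := stepWeight_nonneg q n2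
  have p3 := stepWeight_pos q hf hS n2 p2
  have n4 : ∀ a, 0 ≤ u₄ a := stepWeight_nonneg p n3
  have p4 := stepWeight_pos (S := fun b a => (a, b) ∈ R) p hf' hS' n3 p3
  have g1 := gibbs_stepWeight hs hf hS n0 p0
  have g2 := gibbs_stepWeight (S := fun b a => (a, b) ∈ R) hr hf' hS' n1 p1
  have g3 := gibbs_stepWeight hq hf hS n2 p2
  have g4 := gibbs_stepWeight (S := fun b a => (a, b) ∈ R) hp hf' hS' n3 p3
  -- `t * H(Y|X) ≤ E log u₀(X)`
  have g0 := mul_le_mul_of_nonneg_left (gibbs_neighbourSum (S := fun b a => (a, b) ∈ R)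
    (u := fun _ => 1) hf' hS' (fun _ => zero_le_one) (fun _ _ => one_pos)) ht
  have e0 : ∑ a, (∑ b, f a b) * Real.log (u₀ a)
      = t * ∑ a, (∑ b, f a b) * Real.log (∑ b, if (a, b) ∈ R then (1 : ℝ) else 0) := by
    rw [Finset.mul_sum]
    refine Finset.sum_congr rfl fun a _ => ?_
    rcases (Finset.sum_nonneg fun b _ => hf a b : 0 ≤ ∑ b, f a b).eq_or_lt with h0 | h0
    · simp [← h0]
    · rw [← degA_eq_sum, hu₀, Real.log_rpow (hdeg a h0)]
      ring
  have g5 := log_sum_ineq (fun a => ∑ b, f a b) u₄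
    (fun a => Finset.sum_nonneg fun b _ => hf a b) n4 p4
  rw [hone, Real.log_one, mul_zero, add_zero, one_mul] at g5
  simp only [Real.log_one, mul_zero, Finset.sum_const_zero, add_zero] at g0
  rw [Finset.sum_comm (f := fun b a => f a b * Real.log (f a b))] at g0 g2 g4
  rw [Wmom_eq_sum_stepWeight, condEntropy, condEntropy, mutualInfo, eX, eY, eXY, eYX]
  rw [← hu₁] at g1
  rw [← hu₂] at g2
  rw [← hu₃] at g3
  rw [← hu₄] at g4
  rw [e0] at g1
  linarith
end

section
/- Let 0 < w < 1 and let p, q, r, s, p'', q'', r'', s'' ≥ 0 be real numbers. Let R be a finite relation between finite types A and B. Then N_{p,q,r,s}(R)^w · N_{p'',q'',r'',s''}(R)^{1−w} ≥ N_{wp+(1−w)p'', wq+(1−w)q'', wr+(1−w)r'', ws+(1−w)s''}(R); that is, ln N_{p,q,r,s}(R) is convex in (p, q, r, s). -/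
/-!
Each summand of `Nmom` is log-convex in the exponents: on a path it is a product of powers of
fixed nonnegative bases, hence the interpolated summand equals the weighted geometric mean of the
two given summands (`rpow_interpolate`), and off paths everything vanishes. Hölder's inequality
says that such a bound survives summation (`sum_le_rpow_mul_rpow`); applying it once for each of
the four nested sums gives the theorem.
-/

open Finset

/-- Hölder's inequality with conjugate exponents `1 / w` and `1 / (1 - w)`: a termwise bound by a
weighted geometric mean passes to finite sums, so the lemma can be iterated over nested sums. -/
lemma sum_le_rpow_mul_rpow {ι : Type*} [Fintype ι] {w : ℝ} (hw0 : 0 < w) (hw1 : w < 1)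
    {f g h : ι → ℝ} (hf : ∀ i, 0 ≤ f i) (hg : ∀ i, 0 ≤ g i)
    (hfg : ∀ i, h i ≤ f i ^ w * g i ^ (1 - w)) :
    ∑ i, h i ≤ (∑ i, f i) ^ w * (∑ i, g i) ^ (1 - w) := by
  have hw' : 0 < 1 - w := sub_pos.mpr hw1
  have hconj : Real.HolderConjugate w⁻¹ (1 - w)⁻¹ :=
    Real.holderConjugate_iff.mpr ⟨(one_lt_inv₀ hw0).mpr hw1, by simp⟩
  have key := Real.inner_le_Lp_mul_Lq_of_nonneg univ hconj
    (f := fun i => f i ^ w) (g := fun i => g i ^ (1 - w))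
    (fun i _ => Real.rpow_nonneg (hf i) _) (fun i _ => Real.rpow_nonneg (hg i) _)
  simp only [Real.rpow_rpow_inv (hf _) hw0.ne', Real.rpow_rpow_inv (hg _) hw'.ne',
    one_div, inv_inv] at key
  exact (sum_le_sum fun i _ => hfg i).trans key

/-- The exponents must be nonnegative for the case `x = 0`, where `0 ^ (u + v) = 0 ^ u * 0 ^ v`
can fail. -/
lemma rpow_interpolate {w x u v : ℝ} (hw0 : 0 < w) (hw1 : w < 1) (hx : 0 ≤ x)
    (hu : 0 ≤ u) (hv : 0 ≤ v) :
    x ^ (w * u + (1 - w) * v) = (x ^ u) ^ w * (x ^ v) ^ (1 - w) := by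
  have hw' : 0 < 1 - w := sub_pos.mpr hw1
  rw [Real.rpow_add_of_nonneg hx (by positivity) (by positivity), mul_comm w, mul_comm (1 - w),
    Real.rpow_mul hx, Real.rpow_mul hx]

/-- log-convexity of `N`:
`N_{p,q,r,s}(R)^w · N_{p'',q'',r'',s''}(R)^(1-w)
  ≥ N_{wp+(1-w)p'', wq+(1-w)q'', wr+(1-w)r'', ws+(1-w)s''}(R)`. -/
theorem stmt8 {A B : Type*} [Fintype A] [Fintype B] [DecidableEq A] [DecidableEq B]
    (w p q r s p'' q'' r'' s'' : ℝ) (hw0 : 0 < w) (hw1 : w < 1)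
    (hp : 0 ≤ p) (hq : 0 ≤ q) (hr : 0 ≤ r) (hs : 0 ≤ s)
    (hp'' : 0 ≤ p'') (hq'' : 0 ≤ q'') (hr'' : 0 ≤ r'') (hs'' : 0 ≤ s'')
    (R : Finset (A × B)) :
    Nmom p q r s R ^ w * Nmom p'' q'' r'' s'' R ^ (1 - w) ≥
      Nmom (w * p + (1 - w) * p'') (w * q + (1 - w) * q'')
        (w * r + (1 - w) * r'') (w * s + (1 - w) * s'') R := by
  have hw' : 0 < 1 - w := sub_pos.mpr hw1
  have hterm : ∀ (p q r s : ℝ) (a : A) (b : B) (c : A) (d : B),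
      0 ≤ if (a, b) ∈ R ∧ (c, b) ∈ R ∧ (c, d) ∈ R then
        (degA R a : ℝ) ^ p * (degB R b : ℝ) ^ q * (degA R c : ℝ) ^ r * (degB R d : ℝ) ^ s
        else 0 := by
    intro p q r s a b c d
    split_ifs <;> positivity
  unfold Nmom
  refine sum_le_rpow_mul_rpow hw0 hw1
    (fun a => sum_nonneg fun b _ => sum_nonneg fun c _ => sum_nonneg fun d _ => hterm ..)
    (fun a => sum_nonneg fun b _ => sum_nonneg fun c _ => sum_nonneg fun d _ => hterm ..)
    fun a => ?_
  refine sum_le_rpow_mul_rpow hw0 hw1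
    (fun b => sum_nonneg fun c _ => sum_nonneg fun d _ => hterm ..)
    (fun b => sum_nonneg fun c _ => sum_nonneg fun d _ => hterm ..) fun b => ?_
  refine sum_le_rpow_mul_rpow hw0 hw1
    (fun c => sum_nonneg fun d _ => hterm ..) (fun c => sum_nonneg fun d _ => hterm ..)
    fun c => ?_
  refine sum_le_rpow_mul_rpow hw0 hw1 (fun d => hterm ..) (fun d => hterm ..) fun d => ?_
  split_ifs
  · rw [rpow_interpolate hw0 hw1 (Nat.cast_nonneg _) hp hp'',
      rpow_interpolate hw0 hw1 (Nat.cast_nonneg _) hq hq'',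
      rpow_interpolate hw0 hw1 (Nat.cast_nonneg _) hr hr'',
      rpow_interpolate hw0 hw1 (Nat.cast_nonneg _) hs hs'']
    iterate 6 rw [Real.mul_rpow (by positivity) (by positivity)]
    apply le_of_eq
    ring
  · simp [Real.zero_rpow hw0.ne']
end

section
/- Let 0 < w < 1 and let p, q, r, s, t, p'', q'', r'', s'', t'' ≥ 0 be real numbers. Let R be a finite relation between finite types A and B. Then W_{p,q,r,s,t}(R)^w · W_{p'',q'',r'',s'',t''}(R)^{1−w} ≥ W_{wp+(1−w)p'', wq+(1−w)q'', wr+(1−w)r'', ws+(1−w)s'', wt+(1−w)t''}(R); that is, ln W_{p,q,r,s,t}(R) is convex in (p, q, r, s, t). -/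
/-!
Log-convexity of `Wmom` in its exponents is Hölder's inequality with exponents `1 / w` and
`1 / (1 - w)`, applied to the sum over quintuples `(a, b, c, d, e)`. Each summand of the moment with
interpolated exponents is the weighted geometric mean, with weights `w` and `1 - w`, of the
corresponding summands of the two given moments (`rpow_interp`), and a sum of weighted geometric
means is at most the weighted geometric mean of the sums (`sum_rpow_mul_rpow_le`).
-/

open Finset

/-- Hölder's inequality in weighted geometric mean form. -/
lemma sum_rpow_mul_rpow_le_s9 {ι : Type*} [Fintype ι] {w : ℝ} (hw0 : 0 < w) (hw1 : w < 1)
    {f g : ι → ℝ} (hf : ∀ i, 0 ≤ f i) (hg : ∀ i, 0 ≤ g i) :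
    ∑ i, f i ^ w * g i ^ (1 - w) ≤ (∑ i, f i) ^ w * (∑ i, g i) ^ (1 - w) := by
  have hw : 0 < 1 - w := sub_pos.2 hw1
  have hpq : Real.HolderConjugate w⁻¹ (1 - w)⁻¹ :=
    Real.HolderConjugate.inv_inv hw0 hw (by ring)
  have h := Real.inner_le_Lp_mul_Lq_of_nonneg univ hpq
    (f := fun i => f i ^ w) (g := fun i => g i ^ (1 - w))
    (fun i _ => Real.rpow_nonneg (hf i) _) (fun i _ => Real.rpow_nonneg (hg i) _)
  simpa [Real.rpow_rpow_inv (hf _) hw0.ne', Real.rpow_rpow_inv (hg _) hw.ne'] using h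

/-- Nonnegativity of the exponents makes this hold at `x = 0` too, where `0 ^ 0 = 1`. -/
lemma rpow_interp {w x p q : ℝ} (hw0 : 0 < w) (hw1 : w < 1) (hx : 0 ≤ x)
    (hp : 0 ≤ p) (hq : 0 ≤ q) :
    x ^ (w * p + (1 - w) * q) = (x ^ p) ^ w * (x ^ q) ^ (1 - w) := by
  rw [Real.rpow_add_of_nonneg hx (mul_nonneg hw0.le hp) (mul_nonneg (sub_pos.2 hw1).le hq),
    mul_comm w, mul_comm (1 - w), Real.rpow_mul hx, Real.rpow_mul hx]

/-- The summand of `Wmom` at a quintuple `(a, b, c, d, e)`. -/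
noncomputable def wTerm {A B : Type*} [DecidableEq A] [DecidableEq B] (p q r s t : ℝ)
    (R : Finset (A × B)) (x : A × B × A × B × A) : ℝ :=
  if (x.1, x.2.1) ∈ R ∧ (x.2.2.1, x.2.1) ∈ R ∧ (x.2.2.1, x.2.2.2.1) ∈ R ∧
      (x.2.2.2.2, x.2.2.2.1) ∈ R then
    (degA R x.1 : ℝ) ^ p * (degB R x.2.1 : ℝ) ^ q * (degA R x.2.2.1 : ℝ) ^ r *
      (degB R x.2.2.2.1 : ℝ) ^ s * (degA R x.2.2.2.2 : ℝ) ^ t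
  else 0

lemma wTerm_nonneg {A B : Type*} [DecidableEq A] [DecidableEq B] (p q r s t : ℝ)
    (R : Finset (A × B)) (x : A × B × A × B × A) : 0 ≤ wTerm p q r s t R x := by
  unfold wTerm
  split_ifs <;> positivity

lemma Wmom_eq_sum_wTerm {A B : Type*} [Fintype A] [Fintype B] [DecidableEq A] [DecidableEq B]
    (p q r s t : ℝ) (R : Finset (A × B)) :
    Wmom p q r s t R = ∑ x, wTerm p q r s t R x := by
  simp only [Wmom, wTerm, Fintype.sum_prod_type]

/-- log-convexity of `W`:
`W_{p,q,r,s,t}(R)^w · W_{p'',q'',r'',s'',t''}(R)^(1-w)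
  ≥ W_{wp+(1-w)p'', wq+(1-w)q'', wr+(1-w)r'', ws+(1-w)s'', wt+(1-w)t''}(R)`. -/
theorem stmt9 {A B : Type*} [Fintype A] [Fintype B] [DecidableEq A] [DecidableEq B]
    (w p q r s t p'' q'' r'' s'' t'' : ℝ) (hw0 : 0 < w) (hw1 : w < 1)
    (hp : 0 ≤ p) (hq : 0 ≤ q) (hr : 0 ≤ r) (hs : 0 ≤ s) (ht : 0 ≤ t)
    (hp'' : 0 ≤ p'') (hq'' : 0 ≤ q'') (hr'' : 0 ≤ r'') (hs'' : 0 ≤ s'')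
    (ht'' : 0 ≤ t'') (R : Finset (A × B)) :
    Wmom p q r s t R ^ w * Wmom p'' q'' r'' s'' t'' R ^ (1 - w) ≥
      Wmom (w * p + (1 - w) * p'') (w * q + (1 - w) * q'')
        (w * r + (1 - w) * r'') (w * s + (1 - w) * s'')
        (w * t + (1 - w) * t'') R := by
  rw [ge_iff_le]
  simp only [Wmom_eq_sum_wTerm]
  refine le_trans (Finset.sum_le_sum fun x _ => le_of_eq ?_)
    (sum_rpow_mul_rpow_le_s9 hw0 hw1 (wTerm_nonneg p q r s t R) (wTerm_nonneg p'' q'' r'' s'' t'' R))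
  unfold wTerm
  split_ifs
  · rw [rpow_interp hw0 hw1 (Nat.cast_nonneg _) hp hp'',
      rpow_interp hw0 hw1 (Nat.cast_nonneg _) hq hq'',
      rpow_interp hw0 hw1 (Nat.cast_nonneg _) hr hr'',
      rpow_interp hw0 hw1 (Nat.cast_nonneg _) hs hs'',
      rpow_interp hw0 hw1 (Nat.cast_nonneg _) ht ht'']
    repeat rw [Real.mul_rpow (by positivity) (by positivity)]
    ring
  · simp [Real.zero_rpow hw0.ne']
end

section
/- Let p and q be positive integers, let A and B be finite types, and let (X, Y) be a pair of random variables with X valued in A and Y valued in B. Let (X₀, Y₀) be distributed as (X, Y), and let Y₁, …, Y_{p−1}, X₁, …, X_{q−1} be random variables, conditionally independent given (X₀, Y₀), such that each pair (X₀, Yᵢ) and each pair (X_j, Y₀) has the same joint distribution as (X, Y), with each Yᵢ conditionally independent of Y₀ given X₀ and each X_j conditionally independent of X₀ given Y₀. Then H(X₀, Y₀, Y₁, …, Y_{p−1}, X₁, …, X_{q−1}) = p·H(Y|X) + I(X;Y) + q·H(X|Y). -/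
/-!
The product formula lets the logarithm of the joint law split, at every atom of positive
probability, into the logarithms of the pair laws `(X₀, Y₀)`, `(X₀, Yᵢ)`, `(Xⱼ, Y₀)` minus
`p - 1` times that of `X₀` and `q - 1` times that of `Y₀`. Averaging a logarithm of a marginal
law against the joint law gives minus the entropy of that marginal (`entropy_comp`), so the joint
entropy is
`H(X₀, Y₀) + ∑ᵢ H(X₀, Yᵢ) + ∑ⱼ H(Xⱼ, Y₀) - (p - 1) H(X₀) - (q - 1) H(Y₀)`.
All the pairs have the law of `(X, Y)`, hence `X₀` has the law of `X` and `Y₀` that of `Y`, and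
the claim follows by linear arithmetic.
-/

open MeasureTheory Finset

/-- The law of `g ∘ Z` is the push-forward of the law of `Z` under `g`. -/
lemma prob_comp {Ω : Type*} [MeasurableSpace Ω] (μ : Measure Ω) [IsFiniteMeasure μ]
    {α γ : Type*} [Fintype α] [MeasurableSpace α] [MeasurableSingletonClass α] [DecidableEq γ]
    (Z : Ω → α) (hZ : Measurable Z) (g : α → γ) (c : γ) :
    prob μ (fun ω => g (Z ω)) c = ∑ z with g z = c, prob μ Z z := by
  have h := sum_measureReal_preimage_singleton (μ := μ) (f := Z)
    (univ.filter fun z => g z = c) (fun z _ => hZ (measurableSet_singleton z))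
  simp only [Measure.real] at h
  simp only [prob]
  rw [h]
  congr 2
  ext ω
  simp

lemma prob_nonneg {Ω : Type*} [MeasurableSpace Ω] (μ : Measure Ω) {α : Type*} (X : Ω → α)
    (a : α) : 0 ≤ prob μ X a := ENNReal.toReal_nonneg

lemma prob_le_prob_comp {Ω : Type*} [MeasurableSpace Ω] (μ : Measure Ω) [IsFiniteMeasure μ]
    {α γ : Type*} (Z : Ω → α) (g : α → γ) (z : α) :
    prob μ Z z ≤ prob μ (fun ω => g (Z ω)) (g z) := by
  refine ENNReal.toReal_mono (measure_ne_top _ _) (measure_mono ?_)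
  rintro ω rfl
  rfl

/-- The entropy of a function of `Z`, as an average over the law of `Z`. -/
lemma entropy_comp {Ω : Type*} [MeasurableSpace Ω] (μ : Measure Ω) [IsFiniteMeasure μ]
    {α γ : Type*} [Fintype α] [MeasurableSpace α] [MeasurableSingletonClass α] [Fintype γ]
    (Z : Ω → α) (hZ : Measurable Z) (g : α → γ) :
    ∑ z, prob μ Z z * Real.log (prob μ (fun ω => g (Z ω)) (g z)) =
      - entropy μ (fun ω => g (Z ω)) := by
  classical
  rw [entropy, neg_neg, ← Finset.sum_fiberwise univ g]
  refine Finset.sum_congr rfl fun c _ => ?_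
  conv_rhs => rw [prob_comp μ Z hZ g c, Finset.sum_mul, ← prob_comp μ Z hZ g c]
  refine Finset.sum_congr rfl fun z hz => ?_
  rw [(Finset.mem_filter.1 hz).2]

lemma entropy_congr {Ω : Type*} [MeasurableSpace Ω] (μ : Measure Ω) {α : Type*} [Fintype α]
    {X X' : Ω → α} (h : ∀ a, prob μ X a = prob μ X' a) : entropy μ X = entropy μ X' := by
  simp only [entropy, h]

/-- Equality in law passes to functions of the random variables. -/
lemma prob_comp_congr {Ω : Type*} [MeasurableSpace Ω] (μ : Measure Ω) [IsFiniteMeasure μ]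
    {α γ : Type*} [Fintype α] [MeasurableSpace α] [MeasurableSingletonClass α]
    {Z Z' : Ω → α} (hZ : Measurable Z) (hZ' : Measurable Z')
    (h : ∀ z, prob μ Z z = prob μ Z' z) (g : α → γ) (c : γ) :
    prob μ (fun ω => g (Z ω)) c = prob μ (fun ω => g (Z' ω)) c := by
  classical
  rw [prob_comp μ Z hZ, prob_comp μ Z' hZ']
  simp only [h]

/-- entropy of a random bi-star: if `(X₀, Y₀) ~ (X, Y)`,
each `(X₀, Yᵢ) ~ (X, Y)`, each `(Xⱼ, Y₀) ~ (X, Y)`, and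
`Y₁, …, Y_{p-1}, X₁, …, X_{q-1}` are conditionally independent given
`(X₀, Y₀)`, with each `Yᵢ` depending on `(X₀, Y₀)` only through `X₀` and each
`Xⱼ` only through `Y₀` (all encoded by the division-free product formula
`P(joint) · P(X₀ = a)^(p-1) · P(Y₀ = b)^(q-1)
  = P(X₀ = a, Y₀ = b) · ∏ᵢ P(X₀ = a, Yᵢ = ysᵢ) · ∏ⱼ P(Xⱼ = xsⱼ, Y₀ = b)`),
then `H(X₀, Y₀, Y₁, …, Y_{p-1}, X₁, …, X_{q-1})
  = p·H(Y|X) + I(X;Y) + q·H(X|Y)`. -/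
theorem stmt12 {Ω : Type*} [MeasurableSpace Ω]
    {A B : Type*} [Fintype A] [Fintype B]
    [MeasurableSpace A] [MeasurableSingletonClass A]
    [MeasurableSpace B] [MeasurableSingletonClass B]
    (p q : ℕ) (hp : 0 < p) (hq : 0 < q)
    (μ : Measure Ω) [IsProbabilityMeasure μ]
    (X : Ω → A) (Y : Ω → B) (hX : Measurable X) (hY : Measurable Y)
    (X₀ : Ω → A) (Y₀ : Ω → B) (Ys : Fin (p - 1) → Ω → B) (Xs : Fin (q - 1) → Ω → A)
    (hX₀ : Measurable X₀) (hY₀ : Measurable Y₀)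
    (hYs : ∀ i, Measurable (Ys i)) (hXs : ∀ j, Measurable (Xs j))
    (hdist : ∀ (a : A) (b : B),
      prob μ (fun ω => (X₀ ω, Y₀ ω)) (a, b) =
        prob μ (fun ω => (X ω, Y ω)) (a, b))
    (hYpairs : ∀ (i : Fin (p - 1)) (a : A) (b : B),
      prob μ (fun ω => (X₀ ω, Ys i ω)) (a, b) =
        prob μ (fun ω => (X ω, Y ω)) (a, b))
    (hXpairs : ∀ (j : Fin (q - 1)) (a : A) (b : B),
      prob μ (fun ω => (Xs j ω, Y₀ ω)) (a, b) =
        prob μ (fun ω => (X ω, Y ω)) (a, b))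
    (hindep : ∀ (a : A) (b : B) (ys : Fin (p - 1) → B) (xs : Fin (q - 1) → A),
      prob μ (fun ω => (X₀ ω, Y₀ ω, fun i => Ys i ω, fun j => Xs j ω))
            (a, b, ys, xs) *
          prob μ X₀ a ^ (p - 1) * prob μ Y₀ b ^ (q - 1) =
        prob μ (fun ω => (X₀ ω, Y₀ ω)) (a, b) *
          (∏ i : Fin (p - 1), prob μ (fun ω => (X₀ ω, Ys i ω)) (a, ys i)) *
          (∏ j : Fin (q - 1), prob μ (fun ω => (Xs j ω, Y₀ ω)) (xs j, b))) :
    entropy μ (fun ω => (X₀ ω, Y₀ ω, fun i => Ys i ω, fun j => Xs j ω)) =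
      (p : ℝ) * condEntropy μ Y X + mutualInfo μ X Y +
        (q : ℝ) * condEntropy μ X Y := by
  have hXY : Measurable fun ω => (X ω, Y ω) := hX.prodMk hY
  have hXY₀ : Measurable fun ω => (X₀ ω, Y₀ ω) := hX₀.prodMk hY₀
  have hlaw : ∀ z : A × B, prob μ (fun ω => (X₀ ω, Y₀ ω)) z = prob μ (fun ω => (X ω, Y ω)) z :=
    fun z => hdist z.1 z.2
  have eX : entropy μ X₀ = entropy μ X :=
    entropy_congr μ fun a => prob_comp_congr μ hXY₀ hXY hlaw Prod.fst a
  have eY : entropy μ Y₀ = entropy μ Y :=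
    entropy_congr μ fun b => prob_comp_congr μ hXY₀ hXY hlaw Prod.snd b
  have e₀ : entropy μ (fun ω => (X₀ ω, Y₀ ω)) = entropy μ (fun ω => (X ω, Y ω)) :=
    entropy_congr μ hlaw
  have eYs : ∀ i, entropy μ (fun ω => (X₀ ω, Ys i ω)) = entropy μ (fun ω => (X ω, Y ω)) :=
    fun i => entropy_congr μ fun z => hYpairs i z.1 z.2
  have eXs : ∀ j, entropy μ (fun ω => (Xs j ω, Y₀ ω)) = entropy μ (fun ω => (X ω, Y ω)) :=
    fun j => entropy_congr μ fun z => hXpairs j z.1 z.2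
  have eSwap : entropy μ (fun ω => (Y ω, X ω)) = entropy μ (fun ω => (X ω, Y ω)) := by
    have h := entropy_comp μ _ hXY Prod.swap
    have hs : ∀ z : A × B, prob μ (fun ω => Prod.swap (X ω, Y ω)) z.swap =
        prob μ (fun ω => (X ω, Y ω)) z := by
      intro z
      unfold prob
      congr 2
      ext ω
      simp [Prod.ext_iff, and_comm]
    simp only [hs] at h
    have h' : entropy μ (fun ω => (X ω, Y ω)) = - -entropy μ (fun ω => (Y ω, X ω)) :=
      congrArg Neg.neg h
    rw [h', neg_neg]
  set Z : Ω → A × B × (Fin (p - 1) → B) × (Fin (q - 1) → A) :=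
    fun ω => (X₀ ω, Y₀ ω, fun i => Ys i ω, fun j => Xs j ω) with hZdef
  have hZ : Measurable Z :=
    hX₀.prodMk (hY₀.prodMk ((measurable_pi_lambda _ hYs).prodMk (measurable_pi_lambda _ hXs)))
  -- Away from atoms of probability zero, take logarithms in the product formula.
  have key : ∀ z, prob μ Z z * Real.log (prob μ Z z) =
      prob μ Z z * Real.log (prob μ (fun ω => (X₀ ω, Y₀ ω)) (z.1, z.2.1))
      + ∑ i, prob μ Z z * Real.log (prob μ (fun ω => (X₀ ω, Ys i ω)) (z.1, z.2.2.1 i))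
      + ∑ j, prob μ Z z * Real.log (prob μ (fun ω => (Xs j ω, Y₀ ω)) (z.2.2.2 j, z.2.1))
      - ((p - 1 : ℕ) : ℝ) * (prob μ Z z * Real.log (prob μ X₀ z.1))
      - ((q - 1 : ℕ) : ℝ) * (prob μ Z z * Real.log (prob μ Y₀ z.2.1)) := by
    intro z
    rcases (prob_nonneg μ Z z).eq_or_lt with h0 | hpos
    · simp [← h0]
    have p₀ : prob μ (fun ω => (X₀ ω, Y₀ ω)) (z.1, z.2.1) ≠ 0 :=
      (hpos.trans_le (prob_le_prob_comp μ Z (fun z => (z.1, z.2.1)) z)).ne'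
    have pY : ∀ i, prob μ (fun ω => (X₀ ω, Ys i ω)) (z.1, z.2.2.1 i) ≠ 0 := fun i =>
      (hpos.trans_le (prob_le_prob_comp μ Z (fun z => (z.1, z.2.2.1 i)) z)).ne'
    have pX : ∀ j, prob μ (fun ω => (Xs j ω, Y₀ ω)) (z.2.2.2 j, z.2.1) ≠ 0 := fun j =>
      (hpos.trans_le (prob_le_prob_comp μ Z (fun z => (z.2.2.2 j, z.2.1)) z)).ne'
    have pa : prob μ X₀ z.1 ≠ 0 :=
      (hpos.trans_le (prob_le_prob_comp μ Z (fun z => z.1) z)).ne'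
    have pb : prob μ Y₀ z.2.1 ≠ 0 :=
      (hpos.trans_le (prob_le_prob_comp μ Z (fun z => z.2.1) z)).ne'
    have h := congrArg Real.log (hindep z.1 z.2.1 z.2.2.1 z.2.2.2)
    rw [Real.log_mul (mul_ne_zero hpos.ne' (pow_ne_zero _ pa)) (pow_ne_zero _ pb),
      Real.log_mul hpos.ne' (pow_ne_zero _ pa), Real.log_pow, Real.log_pow,
      Real.log_mul (mul_ne_zero p₀ (Finset.prod_ne_zero_iff.2 fun i _ => pY i))
        (Finset.prod_ne_zero_iff.2 fun j _ => pX j),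
      Real.log_mul p₀ (Finset.prod_ne_zero_iff.2 fun i _ => pY i),
      Real.log_prod fun i _ => pY i, Real.log_prod fun j _ => pX j] at h
    rw [← Finset.mul_sum, ← Finset.mul_sum]
    linear_combination prob μ Z z * h
  have s₀ := entropy_comp μ Z hZ (fun z => (z.1, z.2.1))
  have sY := fun i => entropy_comp μ Z hZ (fun z => (z.1, z.2.2.1 i))
  have sX := fun j => entropy_comp μ Z hZ (fun z => (z.2.2.2 j, z.2.1))
  have sa := entropy_comp μ Z hZ (fun z => z.1)
  have sb := entropy_comp μ Z hZ (fun z => z.2.1)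
  simp only [hZdef] at s₀ sY sX sa sb
  have hH : entropy μ Z = -∑ z, prob μ Z z * Real.log (prob μ Z z) := rfl
  rw [hH, Finset.sum_congr rfl fun z _ => key z, Finset.sum_sub_distrib, Finset.sum_sub_distrib,
    Finset.sum_add_distrib, Finset.sum_add_distrib, ← Finset.mul_sum, ← Finset.mul_sum,
    Finset.sum_comm, Finset.sum_comm (t := (univ : Finset (Fin (q - 1))))]
  simp only [hZdef]
  rw [s₀, sa, sb, Finset.sum_congr rfl fun i _ => sY i, Finset.sum_congr rfl fun j _ => sX j]
  simp only [e₀, eYs, eXs, eX, eY, condEntropy, mutualInfo, eSwap, Finset.sum_const,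
    Finset.card_univ, Fintype.card_fin, nsmul_eq_mul]
  rw [Nat.cast_sub hp, Nat.cast_sub hq]
  push_cast
  ring
end

section
/- Let A, B, C be finite types and let R ⊆ A × B, S ⊆ B × C, T ⊆ C × A be finite relations. Then the number of triples (a, b, c) with (a,b) ∈ R, (b,c) ∈ S, and (c,a) ∈ T is at most |R|^{1/2} · |S|^{1/2} · |T|^{1/2}. -/
/-!
Let `J` be the join and let `n (a, b)` be the number of triples of `J` over `(a, b) ∈ R`.
Then `|J| = ∑ n` over `R`, so Cauchy–Schwarz gives `|J|² ≤ |R| · ∑ n²`. The sum `∑ n²` counts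
the pairs of triples `(a, b, c)`, `(a, b, d)` of `J`, and such a pair is determined by
`(b, c) ∈ S` and `(d, a) ∈ T`, so `∑ n² ≤ |S| · |T|`. Taking square roots gives the bound.
-/

open Finset

/-- the AGM bound for the triangle join: the number of
triples `(a, b, c)` with `(a, b) ∈ R`, `(b, c) ∈ S`, and `(c, a) ∈ T` is at
most `|R|^(1/2) · |S|^(1/2) · |T|^(1/2)`. -/
theorem stmt18 {A B C : Type*} [Fintype A] [Fintype B] [Fintype C]
    [DecidableEq A] [DecidableEq B] [DecidableEq C]
    (R : Finset (A × B)) (S : Finset (B × C)) (T : Finset (C × A)) :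
    ((Finset.univ.filter fun x : A × B × C =>
        (x.1, x.2.1) ∈ R ∧ (x.2.1, x.2.2) ∈ S ∧ (x.2.2, x.1) ∈ T).card : ℝ) ≤
      (R.card : ℝ) ^ ((1 : ℝ) / 2) * (S.card : ℝ) ^ ((1 : ℝ) / 2) *
        (T.card : ℝ) ^ ((1 : ℝ) / 2) := by
  set J : Finset (A × B × C) := Finset.univ.filter fun x : A × B × C =>
        (x.1, x.2.1) ∈ R ∧ (x.2.1, x.2.2) ∈ S ∧ (x.2.2, x.1) ∈ T with hJ
  have hmem : ∀ x, x ∈ J ↔ (x.1, x.2.1) ∈ R ∧ (x.2.1, x.2.2) ∈ S ∧ (x.2.2, x.1) ∈ T := by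
    simp [hJ]
  let F : A × B → Finset (A × B × C) := fun r => J.filter fun x => (x.1, x.2.1) = r
  have hcard : J.card = ∑ r ∈ R, (F r).card :=
    Finset.card_eq_sum_card_fiberwise fun x hx => ((hmem x).1 hx).1
  have hsq : ∑ r ∈ R, (F r).card ^ 2 ≤ S.card * T.card := by
    have hsigma : ∑ r ∈ R, (F r).card ^ 2 = (R.sigma fun r => F r ×ˢ F r).card := by
      simp [Finset.card_sigma, sq]
    rw [hsigma, ← Finset.card_product]
    -- `(b, c)` is read off the first triple and `(d, a)` off the second.
    refine Finset.card_le_card_of_injOn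
      (fun p => ((p.2.1.2.1, p.2.1.2.2), (p.2.2.2.2, p.2.2.1))) ?_ ?_
    · rintro ⟨r, x, y⟩ h
      simp only [Finset.coe_sigma, Set.mem_sigma_iff, Finset.mem_coe, Finset.mem_product, F,
        Finset.mem_filter, hmem] at h ⊢
      exact ⟨h.2.1.1.2.1, h.2.2.1.2.2⟩
    · rintro ⟨⟨a, b⟩, ⟨a₁, b₁, c₁⟩, ⟨a₂, b₂, c₂⟩⟩ h ⟨⟨u, v⟩, ⟨a₃, b₃, c₃⟩, ⟨a₄, b₄, c₄⟩⟩ k e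
      simp only [Finset.coe_sigma, Set.mem_sigma_iff, Finset.mem_coe, Finset.mem_product, F,
        Finset.mem_filter, Prod.mk.injEq] at h k e
      obtain ⟨-, ⟨-, rfl, rfl⟩, -, rfl, rfl⟩ := h
      obtain ⟨-, ⟨-, rfl, rfl⟩, -, rfl, rfl⟩ := k
      obtain ⟨⟨rfl, rfl⟩, rfl, rfl⟩ := e
      rfl
  have hmain : J.card ^ 2 ≤ R.card * S.card * T.card := by
    rw [hcard, mul_assoc]
    exact sq_sum_le_card_mul_sum_sq.trans (Nat.mul_le_mul_left _ hsq)
  rw [← Real.sqrt_eq_rpow, ← Real.sqrt_eq_rpow, ← Real.sqrt_eq_rpow,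
    ← Real.sqrt_mul (by positivity), ← Real.sqrt_mul (by positivity)]
  exact Real.le_sqrt_of_sq_le (by exact_mod_cast hmain)
end
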